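/- Let A = B + C be a skew left brace with a factorization through left ideals B and C, which are trivial as skew left braces. If B is a strong left ideal of A, then A is right nilpotent of class at most four, i.e., A^(4) = 0. -/

import Mathlib

/-- A skew left brace: `(A,+)` and `(A,∘)` are groups (sharing the same identity `0`)
such that `a ∘ (b + c) = a ∘ b - a + a ∘ c`.  Here `circ` is the operation `∘` and
`cinv a` is the inverse of `a` in `(A,∘)`. -/
class SkewBrace (A : Type*) extends AddGroup A where
  circ : A → A → A
  cinv : A → A
  circ_assoc : ∀ a b c : A, circ (circ a b) c = circ a (circ b c)
  zero_circ : ∀ a : A, circ 0 a = a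
  circ_zero : ∀ a : A, circ a 0 = a
  cinv_circ : ∀ a : A, circ (cinv a) a = 0
  circ_cinv : ∀ a : A, circ a (cinv a) = 0
  compat : ∀ a b c : A, circ a (b + c) = circ a b + -a + circ a c

open SkewBrace

/-- `lam a b = -a + a ∘ b`. -/
def lam {A : Type*} [SkewBrace A] (a b : A) : A := -a + circ a b

/-- The star operation `a * b = lam a b - b = -a + a ∘ b - b`. -/
def bstar {A : Type*} [SkewBrace A] (a b : A) : A := lam a b - b

/-- `X * Y`: the subgroup of `(A,+)` generated by `{x * y : x ∈ X, y ∈ Y}`. -/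
def starSpan {A : Type*} [SkewBrace A] (X Y : Set A) : AddSubgroup A :=
  AddSubgroup.closure {z | ∃ x ∈ X, ∃ y ∈ Y, z = bstar x y}

/-- The right series of `st`: `rseriesOf st 0 = A = A^(1)` and
`rseriesOf st n = A^(n+1)`, so that `A^(n+1) = A^(n) * A`. -/
def rseriesOf {G : Type*} [AddGroup G] (st : G → G → G) : ℕ → AddSubgroup G
  | 0 => ⊤
  | n + 1 => AddSubgroup.closure {z | ∃ u ∈ rseriesOf st n, ∃ a : G, z = st u a}

/-! The left ideal `B` is fixed pointwise by `λ_b` for `b ∈ B`, so `λ_a` restricted to `B` depends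
only on the additive coset `a + B`; likewise `λ_a` restricted to `C` depends only on `a + C`. Hence
`λ_b(c)` and `c` act alike on `B`, and the elements `b * c = λ_b(c) - c` lie in the subgroup `K` of
those `k ∈ C` that act trivially on `B`, both through `λ` and by additive conjugation. This gives
`(b + c) * (b' + c') = c * b' + b * c'`, an element of `B + K`, so `A^(2) ⊆ B + K`. If `c ∈ K`, the
first summand vanishes, so `A^(3) ⊆ K`; if moreover `b = 0`, so does the second, and `A^(4) = 0`. -/

namespace SkewBrace

theorem rseriesOf_succ_le {G : Type*} [AddGroup G] {st : G → G → G} {n : ℕ} {H K : AddSubgroup G}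
    (hH : rseriesOf st n ≤ H) (hK : ∀ u ∈ H, ∀ a, st u a ∈ K) : rseriesOf st (n + 1) ≤ K := by
  rw [rseriesOf, AddSubgroup.closure_le]
  rintro _ ⟨u, hu, a, rfl⟩
  exact hK u (hH hu) a

variable {A : Type*} [SkewBrace A]

theorem circ_eq_add_lam (a b : A) : circ a b = a + lam a b :=
  (add_neg_cancel_left a (circ a b)).symm

theorem lam_add (a b c : A) : lam a (b + c) = lam a b + lam a c := by
  simp only [lam, compat, add_assoc]

theorem lam_neg (a b : A) : lam a (-b) = -lam a b :=
  map_neg (AddMonoidHom.mk' (lam a) (lam_add a)) b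

theorem zero_lam (a : A) : lam 0 a = a := by
  simp only [lam, zero_circ, neg_zero, zero_add]

theorem circ_lam (a b c : A) : lam (circ a b) c = lam a (lam b c) := by
  refine add_left_cancel (a := circ a b) ?_
  calc circ a b + lam (circ a b) c = circ a (circ b c) := by rw [← circ_eq_add_lam, circ_assoc]
    _ = a + (lam a b + lam a (lam b c)) := by
      rw [circ_eq_add_lam b c, circ_eq_add_lam, lam_add]
    _ = circ a b + lam a (lam b c) := by rw [← add_assoc, ← circ_eq_add_lam]

theorem lam_lam_cinv (a b : A) : lam a (lam (cinv a) b) = b := by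
  rw [← circ_lam, circ_cinv, zero_lam]

theorem add_eq_circ_lam_cinv (a b : A) : a + b = circ a (lam (cinv a) b) := by
  rw [circ_eq_add_lam, lam_lam_cinv]

theorem bstar_add (a b c : A) : bstar a (b + c) = bstar a b + (b + bstar a c - b) := by
  simp only [bstar, lam_add, sub_eq_add_neg, neg_add_rev, add_assoc, neg_add_cancel_left]

theorem bstar_eq_zero_iff {a b : A} : bstar a b = 0 ↔ lam a b = b :=
  sub_eq_zero

/-- A left ideal: an additive subgroup stable under every `λ_a`. A strong left ideal is a left
ideal that is moreover `AddSubgroup.Normal`. -/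
def IsLeftIdeal (I : AddSubgroup A) : Prop := ∀ a : A, ∀ x ∈ I, lam a x ∈ I

/-- Triviality as a skew brace: the operations `+` and `∘` agree on `I`. It is defined for any
additive subgroup, whether or not `I` is a left ideal. -/
def IsTrivial (I : AddSubgroup A) : Prop := ∀ x ∈ I, ∀ y ∈ I, x + y = circ x y

variable {B C : AddSubgroup A} {b c x y : A}

theorem IsTrivial.lam_eq (hB : IsTrivial B) (hx : x ∈ B) (hy : y ∈ B) : lam x y = y := by
  rw [lam, ← hB x hx y hy, neg_add_cancel_left]

theorem IsTrivial.add_lam (hB : IsTrivial B) (hx : x ∈ B) (hy : y ∈ B) (a : A) :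
    lam (x + y) a = lam x (lam y a) := by
  rw [hB x hx y hy, circ_lam]

theorem IsTrivial.lam_lam_neg (hB : IsTrivial B) (hx : x ∈ B) (a : A) :
    lam x (lam (-x) a) = a := by
  rw [← hB.add_lam hx (B.neg_mem hx), add_neg_cancel, zero_lam]

theorem IsLeftIdeal.lam_add_right_of_mem (hB : IsLeftIdeal B) (hB₀ : IsTrivial B) (a : A)
    (hx : x ∈ B) (hy : y ∈ B) : lam (a + x) y = lam a y := by
  rw [add_eq_circ_lam_cinv, circ_lam, hB₀.lam_eq (hB _ x hx) hy]

theorem IsLeftIdeal.lam_add_left_of_mem [B.Normal] (hB : IsLeftIdeal B) (hB₀ : IsTrivial B) (a : A)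
    (hx : x ∈ B) (hy : y ∈ B) : lam (x + a) y = lam a y := by
  have hconj : -a + x + a ∈ B := ‹B.Normal›.addConj_mem' x hx a
  calc lam (x + a) y = lam (a + (-a + x + a)) y := by rw [add_assoc (-a), add_neg_cancel_left]
    _ = lam a y := hB.lam_add_right_of_mem hB₀ a hconj hy

theorem IsLeftIdeal.lam_lam_of_mem [B.Normal] (hB : IsLeftIdeal B) (hB₀ : IsTrivial B) (a : A)
    (hb : b ∈ B) (hy : y ∈ B) : lam (lam b a) y = lam a y :=
  calc lam (lam b a) y = lam (circ b a) y := hB.lam_add_left_of_mem hB₀ _ (B.neg_mem hb) hy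
    _ = lam a y := by rw [circ_lam, hB₀.lam_eq hb (hB a y hy)]

/-- The elements of `C` that act trivially on `S`, both through `λ` and by conjugation in `(A,+)`.
Triviality of `C` makes the fixator of `S` under `λ`, a subgroup of `(C,∘)`, an additive one. -/
def IsTrivial.actionKernel (hC : IsTrivial C) (S : Set A) : AddSubgroup A where
  carrier := {k | k ∈ C ∧ (∀ y ∈ S, lam k y = y) ∧ k ∈ AddSubgroup.centralizer S}
  zero_mem' := ⟨C.zero_mem, fun y _ ↦ zero_lam y, zero_mem _⟩
  add_mem' := by
    rintro k l ⟨hk, hkS, hk'⟩ ⟨hl, hlS, hl'⟩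
    exact ⟨C.add_mem hk hl, fun y hy ↦ by rw [hC.add_lam hk hl, hlS y hy, hkS y hy],
      add_mem hk' hl'⟩
  neg_mem' := by
    rintro k ⟨hk, hkS, hk'⟩
    refine ⟨C.neg_mem hk, fun y hy ↦ ?_, neg_mem hk'⟩
    calc lam (-k) y = lam (-k) (lam k y) := by rw [hkS y hy]
      _ = y := by rw [← hC.add_lam (C.neg_mem hk) hk, neg_add_cancel, zero_lam]

theorem IsLeftIdeal.lam_bstar_eq [B.Normal] (hB : IsLeftIdeal B) (hB₀ : IsTrivial B)
    (hC : IsLeftIdeal C) (hC₀ : IsTrivial C) (hb : b ∈ B) (hc : c ∈ C) (hy : y ∈ B) :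
    lam (bstar b c) y = y :=
  calc lam (bstar b c) y = lam (lam b c) (lam (-c) y) := by
        rw [bstar, sub_eq_add_neg, hC₀.add_lam (hC b c hc) (C.neg_mem hc)]
    _ = lam c (lam (-c) y) := hB.lam_lam_of_mem hB₀ c hb (hB _ y hy)
    _ = y := hC₀.lam_lam_neg hc y

theorem IsTrivial.bstar_mem_centralizer [B.Normal] (hB : IsTrivial B) (hb : b ∈ B) (a : A) :
    bstar b a ∈ AddSubgroup.centralizer (B : Set A) := by
  rw [AddSubgroup.mem_centralizer_iff]
  intro y hy
  have hconj : -a + y + a ∈ B := ‹B.Normal›.addConj_mem' y hy a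
  -- `λ_b` fixes both `y` and its conjugate by `a`, so `a` and `λ_b(a)` conjugate `y` alike.
  have hfix : -lam b a + y + lam b a = -a + y + a := by
    simpa only [lam_add, lam_neg, hB.lam_eq hb hy] using hB.lam_eq hb hconj
  calc y + bstar b a = lam b a + (-lam b a + y + lam b a) - a := by
        simp only [bstar, sub_eq_add_neg, add_assoc, add_neg_cancel_left]
    _ = lam b a + (-a + y + a) - a := by rw [hfix]
    _ = bstar b a + y := by
        simp only [bstar, sub_eq_add_neg, add_assoc, add_neg_cancel, add_zero]

theorem IsLeftIdeal.bstar_mem_actionKernel [B.Normal] (hB : IsLeftIdeal B) (hB₀ : IsTrivial B)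
    (hC : IsLeftIdeal C) (hC₀ : IsTrivial C) (hb : b ∈ B) (hc : c ∈ C) :
    bstar b c ∈ hC₀.actionKernel B :=
  ⟨C.sub_mem (hC b c hc) hc, fun _ ↦ hB.lam_bstar_eq hB₀ hC hC₀ hb hc,
    hB₀.bstar_mem_centralizer hb c⟩

theorem IsLeftIdeal.bstar_add_add [B.Normal] (hB : IsLeftIdeal B) (hB₀ : IsTrivial B)
    (hC : IsLeftIdeal C) (hC₀ : IsTrivial C) {b' c' : A} (hb : b ∈ B) (hc : c ∈ C) (hb' : b' ∈ B)
    (hc' : c' ∈ C) : bstar (b + c) (b' + c') = bstar c b' + bstar b c' := by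
  have hb'_star : bstar (b + c) b' = bstar c b' := by
    rw [bstar, hB.lam_add_left_of_mem hB₀ c hb hb', bstar]
  have hc'_star : bstar (b + c) c' = bstar b c' := by
    rw [bstar, hC.lam_add_right_of_mem hC₀ b hc hc', bstar]
  have hcomm : b' + bstar b c' = bstar b c' + b' :=
    AddSubgroup.mem_centralizer_iff.mp (hB₀.bstar_mem_centralizer hb c') b' hb'
  rw [bstar_add, hb'_star, hc'_star, hcomm, add_sub_cancel_right]

end SkewBrace

/-- if `A = B + C` is a factorization through left ideals which are trivial
as skew braces, and `B` is moreover a strong left ideal (normal in `(A,+)`), then `A` is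
right nilpotent of class at most four: `A^(4) = 0` (here `rseriesOf bstar 3 = A^(4)`). -/
theorem stmt12 {A : Type*} [SkewBrace A] (B C : AddSubgroup A)
    (hB : ∀ a : A, ∀ x ∈ B, lam a x ∈ B)
    (hC : ∀ a : A, ∀ x ∈ C, lam a x ∈ C)
    (hBn : B.Normal)
    (hBtriv : ∀ x ∈ B, ∀ y ∈ B, x + y = circ x y)
    (hCtriv : ∀ x ∈ C, ∀ y ∈ C, x + y = circ x y)
    (hfact : ∀ a : A, ∃ b ∈ B, ∃ c ∈ C, a = b + c) :
    rseriesOf (bstar (A := A)) 3 = ⊥ := by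
  replace hB : IsLeftIdeal B := hB
  replace hC : IsLeftIdeal C := hC
  replace hBtriv : IsTrivial B := hBtriv
  replace hCtriv : IsTrivial C := hCtriv
  let K : AddSubgroup A := hCtriv.actionKernel B
  have second_term_le : rseriesOf (bstar (A := A)) 1 ≤ B ⊔ K := by
    refine rseriesOf_succ_le le_top fun u _ a ↦ ?_
    obtain ⟨b, hb, c, hc, rfl⟩ := hfact u
    obtain ⟨b', hb', c', hc', rfl⟩ := hfact a
    rw [hB.bstar_add_add hBtriv hC hCtriv hb hc hb' hc']
    exact AddSubgroup.add_mem_sup (B.sub_mem (hB c b' hb') hb')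
      (hB.bstar_mem_actionKernel hBtriv hC hCtriv hb hc')
  have third_term_le : rseriesOf (bstar (A := A)) 2 ≤ K := by
    refine rseriesOf_succ_le second_term_le fun u hu a ↦ ?_
    obtain ⟨b, hb, k, hk, rfl⟩ := AddSubgroup.mem_sup_of_normal_left.mp hu
    obtain ⟨b', hb', c', hc', rfl⟩ := hfact a
    rw [hB.bstar_add_add hBtriv hC hCtriv hb hk.1 hb' hc', bstar_eq_zero_iff.mpr (hk.2.1 b' hb'),
      zero_add]
    exact hB.bstar_mem_actionKernel hBtriv hC hCtriv hb hc'
  refine eq_bot_iff.mpr (rseriesOf_succ_le third_term_le fun k hk a ↦ ?_)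
  obtain ⟨b', hb', c', hc', rfl⟩ := hfact a
  exact bstar_eq_zero_iff.mpr (by rw [lam_add, hk.2.1 b' hb', hCtriv.lam_eq hk.1 hc'])
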